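/- If S and T are maximal caps in AG(4,3) with different anchor points (i.e. −∑_{x∈S} x ≠ −∑_{x∈T} x), then S and T intersect in at least one point. -/

import Mathlib

/-- A cap in `AG(n,3)`: a finite set of points of `Fin n → ZMod 3` containing no
three distinct collinear points (three distinct points are collinear iff they sum to zero). -/
def IsCap {n : ℕ} (C : Finset (Fin n → ZMod 3)) : Prop :=
  ∀ x ∈ C, ∀ y ∈ C, ∀ z ∈ C, x ≠ y → x ≠ z → y ≠ z → x + y + z ≠ 0

/-- A maximal cap: a cap of largest possible size. -/
def MaximalCap {n : ℕ} (C : Finset (Fin n → ZMod 3)) : Prop :=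
  IsCap C ∧ ∀ D : Finset (Fin n → ZMod 3), IsCap D → D.card ≤ C.card


namespace CapAux

abbrev V (n : ℕ) := Fin n → ZMod 3

theorem three_self {n : ℕ} (x : V n) : x + x + x = 0 := by
  funext i
  have h : ∀ a : ZMod 3, a + a + a = 0 := by decide
  exact h (x i)

theorem eq_neg_add {n : ℕ} {x y z : V n} (h : x + y + z = 0) : z = -(x + y) :=
  eq_neg_of_add_eq_zero_right h

/-- Collineations: permutations preserving lines. -/
def Aff {n : ℕ} (f : V n ≃ V n) : Prop := ∀ x y z, x + y + z = 0 → f x + f y + f z = 0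

theorem Aff.symm {n : ℕ} {f : V n ≃ V n} (hf : Aff f) : Aff f.symm := by
  intro x y z h
  have h1 := hf (f.symm x) (f.symm y) (-(f.symm x + f.symm y)) (by abel)
  simp only [Equiv.apply_symm_apply] at h1
  have h2 : z = f (-(f.symm x + f.symm y)) := by rw [eq_neg_add h, eq_neg_add h1]
  rw [h2]; simp

theorem Aff.trans {n : ℕ} {f g : V n ≃ V n} (hf : Aff f) (hg : Aff g) : Aff (f.trans g) :=
  fun x y z h => hg _ _ _ (hf x y z h)

def Eqv {n : ℕ} (S T : Finset (V n)) : Prop := ∃ f : V n ≃ V n, Aff f ∧ S.map f.toEmbedding = T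

theorem Eqv.trans {n : ℕ} {S T U : Finset (V n)} (h1 : Eqv S T) (h2 : Eqv T U) : Eqv S U := by
  obtain ⟨f, hf, rfl⟩ := h1
  obtain ⟨g, hg, rfl⟩ := h2
  exact ⟨f.trans g, hf.trans hg, by rw [Finset.map_map]; rfl⟩

theorem Eqv.card {n : ℕ} {S T : Finset (V n)} (h : Eqv S T) : T.card = S.card := by
  obtain ⟨f, _, rfl⟩ := h
  simp

theorem cap_map {n : ℕ} {S : Finset (V n)} {f : V n ≃ V n} (hf : Aff f) (hS : IsCap S) :
    IsCap (S.map f.toEmbedding) := by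
  intro x hx y hy z hz hxy hxz hyz h
  rw [Finset.mem_map_equiv] at hx hy hz
  exact hS _ hx _ hy _ hz (by simpa using hxy) (by simpa using hxz) (by simpa using hyz)
    (hf.symm _ _ _ h)

theorem Eqv.cap {n : ℕ} {S T : Finset (V n)} (h : Eqv S T) (hS : IsCap S) : IsCap T := by
  obtain ⟨f, hf, rfl⟩ := h
  exact cap_map hf hS

theorem IsCap_subset {n : ℕ} {S T : Finset (V n)} (h : T ⊆ S) (hS : IsCap S) : IsCap T :=
  fun x hx y hy z hz => hS x (h hx) y (h hy) z (h hz)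

instance {n : ℕ} (S : Finset (V n)) : Decidable (IsCap S) := by
  unfold IsCap; infer_instance

/-! ### Slices -/

def sl {n : ℕ} (S : Finset (V (n + 1))) (c : ZMod 3) : Finset (V n) :=
  Finset.univ.filter fun y => (Fin.cons c y : V (n + 1)) ∈ S

theorem mem_sl {n : ℕ} {S : Finset (V (n + 1))} {c : ZMod 3} {y : V n} :
    y ∈ sl S c ↔ (Fin.cons c y : V (n + 1)) ∈ S := by simp [sl]

theorem cons_add3 {n : ℕ} (a b c : ZMod 3) (x y z : V n) :
    (Fin.cons a x : V (n + 1)) + Fin.cons b y + Fin.cons c z =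
      Fin.cons (a + b + c) (x + y + z) := by
  funext i
  refine Fin.cases ?_ (fun j => ?_) i <;> simp

theorem cons_zero_zero {n : ℕ} : (Fin.cons 0 0 : V (n + 1)) = 0 := by
  funext i
  refine Fin.cases ?_ (fun j => ?_) i <;> simp

theorem sl_cap {n : ℕ} {S : Finset (V (n + 1))} (hS : IsCap S) (c : ZMod 3) : IsCap (sl S c) := by
  intro x hx y hy z hz hxy hxz hyz h
  rw [mem_sl] at hx hy hz
  refine hS _ hx _ hy _ hz (by simpa using hxy) (by simpa using hxz) (by simpa using hyz) ?_
  rw [cons_add3, h, (by decide : ∀ c : ZMod 3, c + c + c = 0) c, cons_zero_zero]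

theorem sl_cross {n : ℕ} {S : Finset (V (n + 1))} (hS : IsCap S) {x y z : V n}
    (hx : x ∈ sl S 0) (hy : y ∈ sl S 1) (hz : z ∈ sl S 2) : x + y + z ≠ 0 := by
  intro h
  rw [mem_sl] at hx hy hz
  have e1 : (0 : ZMod 3) ≠ 1 := by decide
  have e2 : (0 : ZMod 3) ≠ 2 := by decide
  have e3 : (1 : ZMod 3) ≠ 2 := by decide
  refine hS _ hx _ hy _ hz ?_ ?_ ?_ ?_
  · intro h; exact e1 (by simpa using congrFun h 0)
  · intro h; exact e2 (by simpa using congrFun h 0)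
  · intro h; exact e3 (by simpa using congrFun h 0)
  · rw [cons_add3, h, show (0 : ZMod 3) + 1 + 2 = 0 by decide, cons_zero_zero]

theorem eq_of_sl {n : ℕ} {S T : Finset (V (n + 1))} (h0 : sl S 0 = sl T 0) (h1 : sl S 1 = sl T 1)
    (h2 : sl S 2 = sl T 2) : S = T := by
  have h : ∀ c, sl S c = sl T c := by
    intro c
    rcases (by decide : ∀ c : ZMod 3, c = 0 ∨ c = 1 ∨ c = 2) c with rfl | rfl | rfl <;> assumption
  ext x
  have := h (x 0)
  have h3 := Finset.ext_iff.1 this (Fin.tail x)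
  rw [mem_sl, mem_sl, Fin.cons_self_tail] at h3
  exact h3

/-- The collineation of `V (n+1)` built from a permutation of the first coordinate, a collineation
of `V n` and a shear. -/
def extE {n : ℕ} (σ : Equiv.Perm (ZMod 3)) (f : V n ≃ V n) (w : V n) : V (n + 1) ≃ V (n + 1) where
  toFun x := Fin.cons (σ (x 0)) (f (Fin.tail x) + x 0 • w)
  invFun y := Fin.cons (σ.symm (y 0)) (f.symm (Fin.tail y - σ.symm (y 0) • w))
  left_inv x := by simp
  right_inv x := by simp

theorem extE_aff {n : ℕ} (σ : Equiv.Perm (ZMod 3)) {f : V n ≃ V n} (hf : Aff f) (w : V n) :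
    Aff (extE σ f w) := by
  intro x y z h
  have hσ : ∀ σ : Equiv.Perm (ZMod 3), ∀ a b c : ZMod 3, a + b + c = 0 →
      σ a + σ b + σ c = 0 := by decide +kernel
  have h0 : x 0 + y 0 + z 0 = 0 := congrFun h 0
  have h1 : Fin.tail x + Fin.tail y + Fin.tail z = 0 := by
    funext i; exact congrFun h i.succ
  change (Fin.cons _ _ : V (n + 1)) + Fin.cons _ _ + Fin.cons _ _ = 0
  rw [cons_add3, hσ σ _ _ _ h0, ← cons_zero_zero]
  congr 1
  calc _ = (f (Fin.tail x) + f (Fin.tail y) + f (Fin.tail z)) + (x 0 + y 0 + z 0) • w := by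
        simp only [add_smul]; abel
    _ = 0 := by rw [hf _ _ _ h1, h0]; simp

theorem exists_ext {n : ℕ} (S : Finset (V (n + 1))) (σ : Equiv.Perm (ZMod 3)) {f : V n ≃ V n}
    (hf : Aff f) (w : V n) : ∃ T, Eqv S T ∧
      ∀ c, sl T (σ c) = ((sl S c).map f.toEmbedding).map (Equiv.addRight (c • w)).toEmbedding := by
  refine ⟨_, ⟨extE σ f w, extE_aff σ hf w, rfl⟩, ?_⟩
  intro c
  ext y
  rw [mem_sl, Finset.mem_map_equiv, Finset.mem_map_equiv, Finset.mem_map_equiv, mem_sl]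
  simp [extE, sub_eq_add_neg]

theorem aff_refl {n : ℕ} : Aff (Equiv.refl (V n)) := fun _ _ _ h => h

theorem map_addRight_zero {n : ℕ} (S : Finset (V n)) (w : V n) (hw : w = 0) :
    S.map (Equiv.addRight w).toEmbedding = S := by
  subst hw; ext x; rw [Finset.mem_map_equiv]; simp [Equiv.addRight]

theorem exists_perm {n : ℕ} (S : Finset (V (n + 1))) (σ : Equiv.Perm (ZMod 3)) :
    ∃ T, Eqv S T ∧ ∀ c, sl T (σ c) = sl S c := by
  obtain ⟨T, h, h2⟩ := exists_ext S σ aff_refl 0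
  refine ⟨T, h, fun c => ?_⟩
  rw [h2, map_addRight_zero _ _ (by simp)]; ext; simp

theorem exists_base {n : ℕ} (S : Finset (V (n + 1))) {f : V n ≃ V n} (hf : Aff f) :
    ∃ T, Eqv S T ∧ ∀ c, sl T c = (sl S c).map f.toEmbedding := by
  obtain ⟨T, h, h2⟩ := exists_ext S (Equiv.refl _) hf 0
  refine ⟨T, h, fun c => ?_⟩
  have := h2 c
  rw [map_addRight_zero _ _ (by simp)] at this
  exact this

theorem exists_shear {n : ℕ} (S : Finset (V (n + 1))) (w : V n) :
    ∃ T, Eqv S T ∧ ∀ c, sl T c = (sl S c).map (Equiv.addRight (c • w)).toEmbedding := by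
  obtain ⟨T, h, h2⟩ := exists_ext S (Equiv.refl _) aff_refl w
  refine ⟨T, h, fun c => ?_⟩
  have := h2 c
  simp only [Equiv.refl_apply] at this
  rw [this]; congr 1; ext; simp

theorem aff_add {n : ℕ} (w : V n) : Aff (Equiv.addRight w) := by
  intro x y z h
  simp only [Equiv.coe_addRight]
  calc _ = (x + y + z) + (w + w + w) := by abel
    _ = 0 := by rw [h, three_self, add_zero]

/-! ### Directions -/

def ip {n : ℕ} (ξ x : V n) : ZMod 3 := ∑ i, ξ i * x i

def hc {n : ℕ} (S : Finset (V n)) (ξ : V n) (c : ZMod 3) : ℕ := (S.filter fun x => ip ξ x = c).card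

theorem ip_add {n : ℕ} (ξ x y : V n) : ip ξ (x + y) = ip ξ x + ip ξ y := by
  simp [ip, mul_add, Finset.sum_add_distrib]

theorem ip_neg {n : ℕ} (ξ x : V n) : ip ξ (-x) = - ip ξ x := by
  simp [ip]

theorem exists_dir_map {n : ℕ} (ξ : V (n + 1)) (hξ : ξ ≠ 0) :
    ∃ f : V (n + 1) ≃ V (n + 1), Aff f ∧ ∀ x, f x 0 = ip ξ x := by
  obtain ⟨i, hi⟩ : ∃ i, ξ i ≠ 0 := by
    by_contra h; push Not at h; exact hξ (funext h)
  let g : V (n + 1) → V (n + 1) := fun x => Fin.cons (ip ξ x) (fun j => x (i.succAbove j))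
  have gadd : ∀ x y, g (x + y) = g x + g y := by
    intro x y; funext j
    refine Fin.cases ?_ (fun j => ?_) j <;> simp [g, ip_add]
  have gneg : ∀ x, g (-x) = - g x := by
    intro x; funext j
    refine Fin.cases ?_ (fun j => ?_) j <;> simp [g, ip_neg]
  have g0 : ∀ x, g x = 0 → x = 0 := by
    intro x hx
    have h1 : ∀ j, x (i.succAbove j) = 0 := fun j => by
      simpa [g] using congrFun hx j.succ
    have h2 : ip ξ x = 0 := by simpa [g] using congrFun hx 0
    have h3 : x i = 0 := by
      rw [ip, Fin.sum_univ_succAbove _ i] at h2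
      simpa [h1, hi] using h2
    funext k
    rcases Fin.eq_self_or_eq_succAbove i k with rfl | ⟨j, rfl⟩
    · exact h3
    · exact h1 j
  have ginj : Function.Injective g := by
    intro x y h
    have : g (x + -y) = 0 := by rw [gadd, gneg, h]; simp
    have := g0 _ this
    rwa [← sub_eq_add_neg, sub_eq_zero] at this
  refine ⟨Equiv.ofBijective g (Finite.injective_iff_bijective.1 ginj), ?_, ?_⟩
  · intro x y z h
    simp only [Equiv.ofBijective_apply]
    rw [← gadd, ← gadd, h]
    have := gadd 0 0
    simpa using this
  · intro x; simp [g]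

theorem exists_dir {n : ℕ} (S : Finset (V (n + 1))) (ξ : V (n + 1)) (hξ : ξ ≠ 0) :
    ∃ T, Eqv S T ∧ ∀ c, (sl T c).card = hc S ξ c := by
  obtain ⟨f, hf, h⟩ := exists_dir_map ξ hξ
  refine ⟨_, ⟨f, hf, rfl⟩, fun c => ?_⟩
  unfold hc
  apply Finset.card_bij (fun y _ => f.symm (Fin.cons c y))
  · intro y hy
    rw [mem_sl, Finset.mem_map_equiv] at hy
    simp [hy, ← h]
  · intro y _ z _ e
    simpa using e
  · intro x hx
    rw [Finset.mem_filter] at hx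
    have e : Fin.cons c (Fin.tail (f x)) = f x := by
      rw [← hx.2, ← h x]; simp
    refine ⟨Fin.tail (f x), ?_, ?_⟩
    · rw [mem_sl, Finset.mem_map_equiv, e]; simpa using hx.1
    · rw [e]; simp

theorem hc_le {n m : ℕ} (hm : ∀ S : Finset (V n), IsCap S → S.card ≤ m)
    (S : Finset (V (n + 1))) (hS : IsCap S) (ξ : V (n + 1)) (hξ : ξ ≠ 0) (c : ZMod 3) :
    hc S ξ c ≤ m := by
  obtain ⟨T, hT, h⟩ := exists_dir S ξ hξ
  rw [← h]
  exact hm _ (sl_cap (hT.cap hS) c)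

/-! ### Moments -/

theorem univ3 : (Finset.univ : Finset (ZMod 3)) = {0, 1, 2} := by decide

theorem sum3 (g : ZMod 3 → ℕ) : ∑ c, g c = g 0 + g 1 + g 2 := by
  rw [univ3, Finset.sum_insert (by decide), Finset.sum_insert (by decide), Finset.sum_singleton]
  ring

theorem sum_fib {n : ℕ} (S : Finset (V n)) (ξ : V n) (g : ZMod 3 → ℕ) :
    ∑ x ∈ S, g (ip ξ x) = hc S ξ 0 * g 0 + hc S ξ 1 * g 1 + hc S ξ 2 * g 2 := by
  rw [← sum3 (fun c => hc S ξ c * g c)]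
  rw [← Finset.sum_fiberwise S (fun x => ip ξ x)]
  apply Finset.sum_congr rfl
  intro c _
  rw [Finset.sum_congr rfl (g := fun _ => g c)]
  · simp [hc]
  · intro x hx; rw [(Finset.mem_filter.1 hx).2]

theorem hc_sum {n : ℕ} (S : Finset (V n)) (ξ : V n) :
    hc S ξ 0 + hc S ξ 1 + hc S ξ 2 = S.card := by
  have := sum_fib S ξ (fun _ => 1)
  simpa using this.symm

theorem hc_eq_sum {n : ℕ} (S : Finset (V n)) (ξ : V n) (c : ZMod 3) :
    hc S ξ c = ∑ x ∈ S, if ip ξ x = c then 1 else 0 := by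
  simp [hc]

def p2 {n : ℕ} (S : Finset (V n)) (ξ : V n) : ℕ :=
  hc S ξ 0 * hc S ξ 0 + hc S ξ 1 * hc S ξ 1 + hc S ξ 2 * hc S ξ 2

def p3 {n : ℕ} (S : Finset (V n)) (ξ : V n) : ℕ :=
  hc S ξ 0 * hc S ξ 0 * hc S ξ 0 + hc S ξ 1 * hc S ξ 1 * hc S ξ 1 +
    hc S ξ 2 * hc S ξ 2 * hc S ξ 2 + 6 * (hc S ξ 0 * hc S ξ 1 * hc S ξ 2)

theorem p2_eq {n : ℕ} (S : Finset (V n)) (ξ : V n) :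
    p2 S ξ = ∑ x ∈ S, ∑ y ∈ S, if ip ξ (y - x) = 0 then 1 else 0 := by
  have := sum_fib S ξ (fun c => hc S ξ c)
  rw [p2, ← this]
  apply Finset.sum_congr rfl
  intro x _
  rw [hc_eq_sum]
  apply Finset.sum_congr rfl
  intro y _
  rw [sub_eq_add_neg, ip_add, ip_neg, ← sub_eq_add_neg]
  simp only [sub_eq_zero]

theorem p3_eq {n : ℕ} (S : Finset (V n)) (ξ : V n) :
    p3 S ξ = ∑ x ∈ S, ∑ y ∈ S, ∑ z ∈ S, if ip ξ (x + y + z) = 0 then 1 else 0 := by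
  have e : ∀ x y : V n, (∑ z ∈ S, if ip ξ (x + y + z) = 0 then 1 else 0) =
      hc S ξ (-(ip ξ x + ip ξ y)) := by
    intro x y
    rw [hc_eq_sum]
    apply Finset.sum_congr rfl
    intro z _
    rw [ip_add, ip_add]
    congr 1
    rw [add_comm, add_eq_zero_iff_eq_neg]
  simp only [e]
  have e2 : ∀ x : V n, ∑ y ∈ S, hc S ξ (-(ip ξ x + ip ξ y)) =
      hc S ξ 0 * hc S ξ (-(ip ξ x + 0)) + hc S ξ 1 * hc S ξ (-(ip ξ x + 1)) +
        hc S ξ 2 * hc S ξ (-(ip ξ x + 2)) := fun x =>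
    sum_fib S ξ (fun c => hc S ξ (-(ip ξ x + c)))
  simp only [e2]
  rw [sum_fib S ξ (fun c => hc S ξ 0 * hc S ξ (-(c + 0)) + hc S ξ 1 * hc S ξ (-(c + 1)) +
        hc S ξ 2 * hc S ξ (-(c + 2)))]
  have d00 : -((0 : ZMod 3) + 0) = 0 := by decide
  have d01 : -((0 : ZMod 3) + 1) = 2 := by decide
  have d02 : -((0 : ZMod 3) + 2) = 1 := by decide
  have d10 : -((1 : ZMod 3) + 0) = 2 := by decide
  have d11 : -((1 : ZMod 3) + 1) = 1 := by decide
  have d12 : -((1 : ZMod 3) + 2) = 0 := by decide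
  have d20 : -((2 : ZMod 3) + 0) = 1 := by decide
  have d21 : -((2 : ZMod 3) + 1) = 0 := by decide
  have d22 : -((2 : ZMod 3) + 2) = 2 := by decide
  simp only [d00, d01, d02, d10, d11, d12, d20, d21, d22, p3]
  ring

theorem mom2 {n B C : ℕ}
    (hK : ∀ d : V n, (∑ ξ : V n, if ip ξ d = 0 then 1 else 0) = B + if d = 0 then C else 0)
    (S : Finset (V n)) : ∑ ξ, p2 S ξ = B * S.card ^ 2 + C * S.card := by
  simp only [p2_eq]
  rw [Finset.sum_comm]
  simp_rw [Finset.sum_comm (s := Finset.univ) (t := S), hK, sub_eq_zero, Finset.sum_add_distrib]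
  simp [Finset.sum_ite_eq']
  ring

theorem cap_count {n : ℕ} {S : Finset (V n)} (hS : IsCap S) {x y : V n} (hx : x ∈ S) (hy : y ∈ S)
    (C : ℕ) : (∑ z ∈ S, if x + y + z = 0 then C else 0) = if y = x then C else 0 := by
  have h : ∀ z ∈ S, (x + y + z = 0 ↔ (y = x ∧ z = x)) := by
    intro z hz
    constructor
    · intro h
      have e : ∀ a b c : V n, a + b + c = 0 → a = b → c = a := by
        intro a b c h1 h2
        subst h2
        have := three_self a
        rw [← h1] at this
        exact (add_left_cancel this).symm
      by_cases hxy : x = y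
      · exact ⟨hxy.symm, e _ _ _ h hxy⟩
      by_cases hxz : x = z
      · exact absurd (e x z y (by rw [← h]; abel) hxz).symm hxy
      by_cases hyz : y = z
      · exact absurd (e y z x (by rw [← h]; abel) hyz) hxy
      exact absurd h (hS x hx y hy z hz hxy hxz hyz)
    · rintro ⟨rfl, rfl⟩; exact three_self _
  rw [Finset.sum_congr rfl (g := fun z => if y = x ∧ z = x then C else 0)]
  · by_cases hyx : y = x
    · simp [hyx, hx]
    · simp [hyx]
  · intro z hz; simp only [h z hz]

theorem mom3 {n B C : ℕ}
    (hK : ∀ d : V n, (∑ ξ : V n, if ip ξ d = 0 then 1 else 0) = B + if d = 0 then C else 0)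
    (S : Finset (V n)) (hS : IsCap S) : ∑ ξ, p3 S ξ = B * S.card ^ 3 + C * S.card := by
  simp only [p3_eq]
  rw [Finset.sum_comm]
  have e : ∀ x ∈ S, (∑ ξ : V n, ∑ y ∈ S, ∑ z ∈ S, if ip ξ (x + y + z) = 0 then 1 else 0) =
      B * S.card ^ 2 + C := by
    intro x hx
    rw [Finset.sum_comm]
    have e2 : ∀ y ∈ S, (∑ ξ : V n, ∑ z ∈ S, if ip ξ (x + y + z) = 0 then 1 else 0) =
      B * S.card + if y = x then C else 0 := by
      intro y hy
      rw [Finset.sum_comm]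
      simp_rw [hK, Finset.sum_add_distrib, cap_count hS hx hy C]
      simp; ring
    rw [Finset.sum_congr rfl e2, Finset.sum_add_distrib]
    simp [hx]; ring
  rw [Finset.sum_congr rfl e]
  simp; ring

theorem hK2 : ∀ d : V 2, (∑ ξ : V 2, if ip ξ d = 0 then 1 else 0) = 3 + if d = 0 then 6 else 0 := by
  decide +kernel

theorem hK3 : ∀ d : V 3, (∑ ξ : V 3, if ip ξ d = 0 then 1 else 0) =
    9 + if d = 0 then 18 else 0 := by
  decide +kernel

theorem hK4 : ∀ d : V 4, (∑ ξ : V 4, if ip ξ d = 0 then 1 else 0) =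
    27 + if d = 0 then 54 else 0 := by
  decide +kernel

theorem hc_zero {n : ℕ} (S : Finset (V n)) :
    hc S 0 0 = S.card ∧ hc S 0 1 = 0 ∧ hc S 0 2 = 0 := by
  have e : (0 : ZMod 3) ≠ 2 := by decide
  refine ⟨?_, ?_, ?_⟩ <;> simp [hc, ip, e]

theorem p2_zero {n : ℕ} (S : Finset (V n)) : p2 S 0 = S.card * S.card := by
  simp [p2, hc_zero]

theorem p3_zero {n : ℕ} (S : Finset (V n)) : p3 S 0 = S.card * S.card * S.card := by
  simp [p3, hc_zero]

theorem sum_bound {n : ℕ} (F G : V n → ℕ) (h : ∀ ξ, ξ ≠ 0 → F ξ ≤ G ξ) :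
    ∑ ξ, F ξ + G 0 ≤ ∑ ξ, G ξ + F 0 := by
  have e1 := Finset.sum_erase_add Finset.univ F (Finset.mem_univ (0 : V n))
  have e2 := Finset.sum_erase_add Finset.univ G (Finset.mem_univ (0 : V n))
  have : ∑ ξ ∈ Finset.univ.erase 0, F ξ ≤ ∑ ξ ∈ Finset.univ.erase 0, G ξ :=
    Finset.sum_le_sum fun ξ hξ => h ξ (Finset.ne_of_mem_erase hξ)
  omega

theorem sum_const_V {n : ℕ} (m : ℕ) : ∑ _ξ : V n, m = 3 ^ n * m := by
  simp [ZMod.card]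

theorem exists_perm' {n : ℕ} (S : Finset (V (n + 1))) (σ : Equiv.Perm (ZMod 3)) :
    ∃ T, Eqv S T ∧ ∀ c, sl T c = sl S (σ c) := by
  obtain ⟨T, h, h2⟩ := exists_perm S σ.symm
  refine ⟨T, h, fun c => ?_⟩
  rw [← h2 (σ c)]; simp

theorem perm6 (Pr : ZMod 3 → ZMod 3 → ZMod 3 → Prop)
    (h : Pr 0 1 2 ∨ Pr 0 2 1 ∨ Pr 1 0 2 ∨ Pr 1 2 0 ∨ Pr 2 0 1 ∨ Pr 2 1 0) :
    ∃ σ : Equiv.Perm (ZMod 3), Pr (σ 0) (σ 1) (σ 2) := by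
  rcases h with h | h | h | h | h | h
  · exact ⟨Equiv.refl _, h⟩
  · exact ⟨Equiv.swap 1 2, by
      rwa [show Equiv.swap (1 : ZMod 3) 2 0 = 0 by decide,
        show Equiv.swap (1 : ZMod 3) 2 1 = 2 by decide,
        show Equiv.swap (1 : ZMod 3) 2 2 = 1 by decide]⟩
  · exact ⟨Equiv.swap 0 1, by
      rwa [show Equiv.swap (0 : ZMod 3) 1 0 = 1 by decide,
        show Equiv.swap (0 : ZMod 3) 1 1 = 0 by decide,
        show Equiv.swap (0 : ZMod 3) 1 2 = 2 by decide]⟩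
  · exact ⟨Equiv.addRight 1, h⟩
  · exact ⟨Equiv.addRight 2, h⟩
  · exact ⟨Equiv.swap 0 2, by
      rwa [show Equiv.swap (0 : ZMod 3) 2 0 = 2 by decide,
        show Equiv.swap (0 : ZMod 3) 2 1 = 1 by decide,
        show Equiv.swap (0 : ZMod 3) 2 2 = 0 by decide]⟩

theorem normal_dir {n : ℕ} (S : Finset (V (n + 1))) (ξ : V (n + 1)) (hξ : ξ ≠ 0)
    (Pr : ℕ → ℕ → ℕ → Prop)
    (h : ∀ a b c, hc S ξ 0 = a → hc S ξ 1 = b → hc S ξ 2 = c →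
      Pr a b c ∨ Pr a c b ∨ Pr b a c ∨ Pr b c a ∨ Pr c a b ∨ Pr c b a) :
    ∃ T, Eqv S T ∧ Pr (sl T 0).card (sl T 1).card (sl T 2).card := by
  obtain ⟨T, hT, h2⟩ := exists_dir S ξ hξ
  obtain ⟨σ, hσ⟩ := perm6 (fun a b c => Pr (sl T a).card (sl T b).card (sl T c).card)
    (by simp only [h2]; exact h _ _ _ rfl rfl rfl)
  obtain ⟨U, hU, h3⟩ := exists_perm' T σ
  refine ⟨U, hT.trans hU, ?_⟩
  simp only [h3]; exact hσ

/-! ### Dimension 2 -/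

theorem cap1_le : ∀ S : Finset (V 1), IsCap S → S.card ≤ 2 := by decide +kernel

theorem cap2_le (S : Finset (V 2)) (hS : IsCap S) : S.card ≤ 4 := by
  by_contra hcon
  obtain ⟨U, hU, hc5⟩ := Finset.exists_subset_card_eq (show 5 ≤ S.card by omega)
  have hUc := IsCap_subset hU hS
  have hb : ∀ ξ : V 2, ξ ≠ 0 → p2 U ξ ≤ 9 := by
    intro ξ hξ
    have h0 := hc_le cap1_le U hUc ξ hξ 0
    have h1 := hc_le cap1_le U hUc ξ hξ 1
    have h2 := hc_le cap1_le U hUc ξ hξ 2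
    have h3 := hc_sum U ξ
    unfold p2
    generalize hc U ξ 0 = a at *
    generalize hc U ξ 1 = b at *
    generalize hc U ξ 2 = c at *
    interval_cases a <;> interval_cases b <;> interval_cases c <;> omega
  have h1 := sum_bound (p2 U) (fun _ => 9) hb
  rw [mom2 hK2, p2_zero, hc5, sum_const_V] at h1
  norm_num at h1

def I2 : Finset (V 1) := {![0], ![1]}

def Sq : Finset (V 2) := {![0, 0], ![0, 1], ![1, 0], ![1, 1]}

theorem I2_trans : ∀ A : Finset (V 1), A.card = 2 → ∃ w : V 1,
    A.map (Equiv.addRight w).toEmbedding = I2 := by decide +kernel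

theorem cap2_class (S : Finset (V 2)) (hS : IsCap S) (hcard : S.card = 4) : Eqv S Sq := by
  obtain ⟨ξ, hξ, hp⟩ : ∃ ξ : V 2, ξ ≠ 0 ∧ 6 < p2 S ξ := by
    by_contra hcon
    push Not at hcon
    have h1 := sum_bound (p2 S) (fun _ => 6) hcon
    rw [mom2 hK2, p2_zero, hcard, sum_const_V] at h1
    norm_num at h1
  obtain ⟨T, hT, t0, t1, t2⟩ := normal_dir S ξ hξ (fun a b c => a = 2 ∧ b = 2 ∧ c = 0) (by
    have h0 := hc_le cap1_le S hS ξ hξ 0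
    have h1 := hc_le cap1_le S hS ξ hξ 1
    have h2 := hc_le cap1_le S hS ξ hξ 2
    have h3 := hc_sum S ξ
    unfold p2 at hp
    rintro a b c rfl rfl rfl
    generalize hc S ξ 0 = a at *
    generalize hc S ξ 1 = b at *
    generalize hc S ξ 2 = c at *
    interval_cases a <;> interval_cases b <;> interval_cases c <;> omega)
  obtain ⟨w, hw⟩ := I2_trans _ t0
  obtain ⟨U, hU, hU2⟩ := exists_base T (aff_add w)
  have u0 : sl U 0 = I2 := by rw [hU2, hw]
  have u1 : (sl U 1).card = 2 := by rw [hU2]; simpa using t1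
  have u2 : sl U 2 = ∅ := by rw [hU2, Finset.card_eq_zero.1 t2]; rfl
  obtain ⟨w', hw'⟩ := I2_trans _ u1
  obtain ⟨W, hW, hW2⟩ := exists_shear U w'
  have : W = Sq := by
    apply eq_of_sl
    · rw [hW2, map_addRight_zero _ _ (by simp), u0]; decide +kernel
    · rw [hW2, one_smul, hw']; decide +kernel
    · rw [hW2, u2, Finset.map_empty]; decide +kernel
  rw [← this]
  exact (hT.trans hU).trans hW

/-! ### Dimension 3 -/

theorem cap3_le (S : Finset (V 3)) (hS : IsCap S) : S.card ≤ 9 := by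
  by_contra hcon
  obtain ⟨U, hU, hc5⟩ := Finset.exists_subset_card_eq (show 10 ≤ S.card by omega)
  have hUc := IsCap_subset hU hS
  have hb : ∀ ξ : V 3, ξ ≠ 0 → p2 U ξ ≤ 36 := by
    intro ξ hξ
    have h0 := hc_le cap2_le U hUc ξ hξ 0
    have h1 := hc_le cap2_le U hUc ξ hξ 1
    have h2 := hc_le cap2_le U hUc ξ hξ 2
    have h3 := hc_sum U ξ
    unfold p2
    generalize hc U ξ 0 = a at *
    generalize hc U ξ 1 = b at *
    generalize hc U ξ 2 = c at *
    interval_cases a <;> interval_cases b <;> interval_cases c <;> omega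
  have h1 := sum_bound (p2 U) (fun _ => 36) hb
  rw [mom2 hK3, p2_zero, hc5, sum_const_V] at h1
  norm_num at h1

def B2 : Finset (V 2) := {![0, 1], ![1, 0], ![1, 2], ![2, 1]}

def P3 : Finset (V 3) :=
  {![0, 0, 0], ![0, 0, 1], ![0, 1, 0], ![0, 1, 1], ![1, 0, 0],
    ![2, 0, 1], ![2, 1, 0], ![2, 1, 2], ![2, 2, 1]}

def alw2 : Finset (V 2) := Finset.univ.filter fun y => ∀ x ∈ Sq, x + 0 + y ≠ 0

theorem B2_unique : ∀ B ∈ alw2.powersetCard 4, IsCap B → B = B2 := by decide +kernel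

theorem cap3_class (S : Finset (V 3)) (hS : IsCap S) (hcard : S.card = 9) : Eqv S P3 := by
  obtain ⟨ξ, hξ, hp⟩ : ∃ ξ : V 3, ξ ≠ 0 ∧ 29 < p2 S ξ := by
    by_contra hcon
    push Not at hcon
    have h1 := sum_bound (p2 S) (fun _ => 29) hcon
    rw [mom2 hK3, p2_zero, hcard, sum_const_V] at h1
    norm_num at h1
  obtain ⟨T, hT, t0, t1, t2⟩ := normal_dir S ξ hξ (fun a b c => a = 4 ∧ b = 1 ∧ c = 4) (by
    have h0 := hc_le cap2_le S hS ξ hξ 0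
    have h1 := hc_le cap2_le S hS ξ hξ 1
    have h2 := hc_le cap2_le S hS ξ hξ 2
    have h3 := hc_sum S ξ
    unfold p2 at hp
    rintro a b c rfl rfl rfl
    generalize hc S ξ 0 = a at *
    generalize hc S ξ 1 = b at *
    generalize hc S ξ 2 = c at *
    interval_cases a <;> interval_cases b <;> interval_cases c <;> omega)
  obtain ⟨f, hf, hf2⟩ := cap2_class _ (sl_cap (hT.cap hS) 0) t0
  obtain ⟨U, hU, hU2⟩ := exists_base T hf
  have u0 : sl U 0 = Sq := by rw [hU2, hf2]
  have u1 : (sl U 1).card = 1 := by rw [hU2]; simpa using t1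
  have u2 : (sl U 2).card = 4 := by rw [hU2]; simpa using t2
  obtain ⟨a, ha⟩ := Finset.card_eq_one.1 u1
  obtain ⟨W, hW, hW2⟩ := exists_shear U (-a)
  have w0 : sl W 0 = Sq := by rw [hW2, map_addRight_zero _ _ (by simp), u0]
  have w1 : sl W 1 = {0} := by rw [hW2, one_smul, ha]; simp
  have w2 : (sl W 2).card = 4 := by rw [hW2]; simpa using u2
  have hE := (hT.trans hU).trans hW
  have hWc := hE.cap hS
  have hB : sl W 2 = B2 := by
    apply B2_unique _ _ (sl_cap hWc 2)
    rw [Finset.mem_powersetCard]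
    refine ⟨fun y hy => ?_, w2⟩
    rw [alw2, Finset.mem_filter]
    refine ⟨Finset.mem_univ _, fun x hx => ?_⟩
    exact sl_cross hWc (by rw [w0]; exact hx) (by rw [w1]; simp) hy
  have : W = P3 := by
    apply eq_of_sl
    · rw [w0]; decide +kernel
    · rw [w1]; decide +kernel
    · rw [hB]; decide +kernel
  rw [← this]
  exact hE

/-! ### Dimension 4 -/

/-- Searches for a proof that more than `k` points have to be removed to hit all lines. -/
def hit : ℕ → List (ℕ × ℕ × ℕ) → Bool
  | _, [] => false
  | 0, _ :: _ => true
  | k + 1, l :: ls =>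
    hit k (ls.filter fun m => m.1 != l.1 && m.2.1 != l.1 && m.2.2 != l.1) &&
    hit k (ls.filter fun m => m.1 != l.2.1 && m.2.1 != l.2.1 && m.2.2 != l.2.1) &&
    hit k (ls.filter fun m => m.1 != l.2.2 && m.2.1 != l.2.2 && m.2.2 != l.2.2)

theorem hit_sound (X : Finset ℕ) (B : ℕ → Prop) (k : ℕ) : ∀ ls : List (ℕ × ℕ × ℕ),
    (∀ l ∈ ls, l.1 ∈ X ∧ l.2.1 ∈ X ∧ l.2.2 ∈ X) →
    (∀ l ∈ ls, ¬ (B l.1 ∧ B l.2.1 ∧ B l.2.2)) → hit k ls = true →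
    ∃ D ⊆ X, k + 1 ≤ D.card ∧ ∀ d ∈ D, ¬ B d := by
  induction k generalizing X with
  | zero =>
    intro ls hX hB h
    cases ls with
    | nil => simp [hit] at h
    | cons l ls =>
      have h1 := hX l (by simp)
      have h2 := hB l (by simp)
      have : ∃ p ∈ X, ¬ B p := by
        by_contra hcon
        push Not at hcon
        exact h2 ⟨hcon _ h1.1, hcon _ h1.2.1, hcon _ h1.2.2⟩
      obtain ⟨p, hp, hp2⟩ := this
      exact ⟨{p}, by simpa using hp, by simp, by simpa using hp2⟩
  | succ k ih =>
    intro ls hX hB h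
    cases ls with
    | nil => simp [hit] at h
    | cons l ls =>
      have h1 := hX l (by simp)
      have h2 := hB l (by simp)
      simp only [hit, Bool.and_eq_true] at h
      have step : ∀ p ∈ X, ¬ B p →
          hit k (ls.filter fun m => m.1 != p && m.2.1 != p && m.2.2 != p) = true →
          ∃ D ⊆ X, k + 1 + 1 ≤ D.card ∧ ∀ d ∈ D, ¬ B d := by
        intro p hp hpB hh
        obtain ⟨D, hD, hD2, hD3⟩ := ih (X.erase p) _ (by
          intro m hm
          simp only [List.mem_filter, Bool.and_eq_true, bne_iff_ne] at hm
          obtain ⟨hm, ⟨m1, m2⟩, m3⟩ := hm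
          have := hX m (by simp [hm])
          simp only [Finset.mem_erase]
          exact ⟨⟨m1, this.1⟩, ⟨m2, this.2.1⟩, ⟨m3, this.2.2⟩⟩) (by
          intro m hm
          exact hB m (by simp [(List.mem_filter.1 hm).1])) hh
        have hpD : p ∉ D := fun h => by simpa using hD h
        refine ⟨insert p D, ?_, ?_, ?_⟩
        · intro d hd
          rcases Finset.mem_insert.1 hd with rfl | hd
          · exact hp
          · exact Finset.mem_of_mem_erase (hD hd)
        · rw [Finset.card_insert_of_notMem hpD]; omega
        · intro d hd
          rcases Finset.mem_insert.1 hd with rfl | hd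
          · exact hpB
          · exact hD3 d hd
      by_cases b1 : B l.1
      · by_cases b2 : B l.2.1
        · have b3 : ¬ B l.2.2 := fun b3 => h2 ⟨b1, b2, b3⟩
          exact step _ h1.2.2 b3 h.2
        · exact step _ h1.2.1 b2 h.1.2
      · exact step _ h1.1 b1 h.1.1

def pt (i : ℕ) : V 3 := ![((i / 9 : ℕ) : ZMod 3), ((i / 3 % 3 : ℕ) : ZMod 3), ((i % 3 : ℕ) : ZMod 3)]

theorem pt_surj : ∀ x : V 3, ∃ i ∈ List.range 27, pt i = x := by decide +kernel

/-- The code of the third point on a line. -/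
def third (i j : ℕ) : ℕ :=
  2 * (i / 9 + j / 9) % 3 * 9 + 2 * (i / 3 % 3 + j / 3 % 3) % 3 * 3 + 2 * (i % 3 + j % 3) % 3

def Pcodes : List ℕ := [0, 1, 3, 4, 9, 19, 21, 23, 25]

/-- Points allowed in the third slice if the second one contains `0` and `pt j`. -/
def alw (j : ℕ) : List ℕ :=
  (List.range 27).filter fun i => !(Pcodes.contains (third 0 i)) && !(Pcodes.contains (third j i))

def linesIn (l : List ℕ) : List (ℕ × ℕ × ℕ) :=
  l.flatMap fun x => (l.filter fun y => Nat.blt x y && Nat.blt y (third x y) &&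
    l.contains (third x y)).map fun y => (x, y, third x y)

theorem alw_sound : ∀ j ∈ List.range 27, ∀ i ∈ List.range 27, i ∉ alw j →
    ∃ p ∈ P3, p + 0 + pt i = 0 ∨ p + pt j + pt i = 0 := by decide +kernel

theorem hit_check : ∀ j ∈ List.range 27, j ≠ 0 → j ≠ 13 → j ≠ 26 →
    (alw j).length ≤ 12 ∧ hit 4 (linesIn (alw j)) = true ∧
    ∀ l ∈ linesIn (alw j), (l.1 ∈ alw j ∧ l.2.1 ∈ alw j ∧ l.2.2 ∈ alw j) ∧
      pt l.1 ≠ pt l.2.1 ∧ pt l.1 ≠ pt l.2.2 ∧ pt l.2.1 ≠ pt l.2.2 ∧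
      pt l.1 + pt l.2.1 + pt l.2.2 = 0 := by decide +kernel

theorem two_points (B : Finset (V 3)) (hB : IsCap B) (hcard : 8 ≤ B.card) (a : V 3)
    (h0 : ∀ p ∈ P3, ∀ b ∈ B, p + 0 + b ≠ 0) (h1 : ∀ p ∈ P3, ∀ b ∈ B, p + a + b ≠ 0) :
    a = pt 0 ∨ a = pt 13 ∨ a = pt 26 := by
  obtain ⟨j, hj, rfl⟩ := pt_surj a
  by_contra hcon
  push Not at hcon
  obtain ⟨n0, n13, n26⟩ := hcon
  obtain ⟨k1, k2, k3⟩ := hit_check j hj (fun h => n0 (by rw [h])) (fun h => n13 (by rw [h]))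
    (fun h => n26 (by rw [h]))
  obtain ⟨D, hD, hD2, hD3⟩ := hit_sound (alw j).toFinset (fun i => pt i ∈ B) 4 _
    (fun l hl => by simpa using (k3 l hl).1)
    (fun l hl hb => by
      obtain ⟨_, q1, q2, q3, q4⟩ := k3 l hl
      exact hB _ hb.1 _ hb.2.1 _ hb.2.2 q1 q2 q3 q4) k2
  have hsub : B ⊆ ((alw j).toFinset \ D).image pt := by
    intro b hb
    obtain ⟨i, hi, rfl⟩ := pt_surj b
    apply Finset.mem_image_of_mem
    rw [Finset.mem_sdiff]
    constructor
    · by_contra hn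
      obtain ⟨p, hp, h | h⟩ := alw_sound j hj i hi (by simpa using hn)
      · exact h0 p hp _ hb h
      · exact h1 p hp _ hb h
    · intro hd; exact hD3 i hd hb
  have c1 := Finset.card_le_card hsub
  have c2 : (((alw j).toFinset \ D).image pt).card ≤ _ := Finset.card_image_le
  have c3 := Finset.card_sdiff_add_card_eq_card hD
  have c4 := List.toFinset_card_le (alw j)
  omega

theorem slice1_form (A : Finset (V 3)) (hA : A ∈ ({pt 0, pt 13, pt 26} : Finset (V 3)).powerset)
    (h0 : 0 ∈ A) (hc : IsCap A) (h2 : 2 ≤ A.card) :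
    A.card = 2 ∧ (A = {0, pt 13} ∨ A = {0, pt 26}) := by
  have e0 : pt 0 = 0 := by decide +kernel
  rw [Finset.mem_powerset, e0] at hA
  have fin : ∀ q : V 3, A ⊆ {0, q} → A.card = 2 ∧ A = {0, q} := by
    intro q hq
    have h3 : ({0, q} : Finset (V 3)).card ≤ 2 := Finset.card_le_two
    have h4 := Finset.eq_of_subset_of_card_le hq (h3.trans h2)
    exact ⟨le_antisymm ((Finset.card_le_card hq).trans h3) h2, h4⟩
  by_cases h13 : pt 13 ∈ A
  · have h26 : pt 26 ∉ A := fun h26 =>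
      hc _ h0 _ h13 _ h26 (by decide +kernel) (by decide +kernel) (by decide +kernel)
        (by decide +kernel)
    obtain ⟨h3, h4⟩ := fin (pt 13) (fun x hx => by
      have h5 := hA hx
      simp only [Finset.mem_insert, Finset.mem_singleton] at h5 ⊢
      rcases h5 with h | h | h
      · exact Or.inl h
      · exact Or.inr h
      · exact absurd (h ▸ hx) h26)
    exact ⟨h3, Or.inl h4⟩
  · obtain ⟨h3, h4⟩ := fin (pt 26) (fun x hx => by
      have h5 := hA hx
      simp only [Finset.mem_insert, Finset.mem_singleton] at h5 ⊢
      rcases h5 with h | h | h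
      · exact Or.inl h
      · exact absurd (h ▸ hx) h13
      · exact Or.inr h)
    exact ⟨h3, Or.inr h4⟩

def S0 : Finset (V 4) :=
  {![0, 0, 0, 0], ![0, 0, 1, 0], ![0, 0, 0, 1], ![0, 0, 1, 1], ![0, 1, 0, 0], ![0, 2, 0, 1],
    ![0, 2, 1, 0], ![0, 2, 1, 2], ![0, 2, 2, 1], ![1, 0, 0, 0], ![1, 2, 2, 2], ![2, 0, 0, 1],
    ![2, 0, 1, 0], ![2, 0, 1, 2], ![2, 0, 2, 1], ![2, 1, 2, 2], ![2, 2, 1, 1], ![2, 2, 1, 2],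
    ![2, 2, 2, 1], ![2, 2, 2, 2]}

theorem alw26 : (alw 26).length = 9 ∧ ((alw 26).toFinset.image pt) = sl S0 2 := by decide +kernel

theorem S0_final (W : Finset (V 4)) (hW : IsCap W) (h0 : sl W 0 = P3) (h1 : sl W 1 = {0, pt 26})
    (h2 : (sl W 2).card = 9) : W = S0 := by
  apply eq_of_sl
  · rw [h0]; decide +kernel
  · rw [h1]; decide +kernel
  · rw [← alw26.2]
    apply Finset.eq_of_subset_of_card_le
    · intro b hb
      obtain ⟨i, hi, rfl⟩ := pt_surj b
      apply Finset.mem_image_of_mem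
      by_contra hn
      obtain ⟨p, hp, h | h⟩ := alw_sound 26 (by decide) i hi (by simpa using hn)
      · exact sl_cross hW (by rw [h0]; exact hp) (by rw [h1]; simp) hb h
      · exact sl_cross hW (by rw [h0]; exact hp) (by rw [h1]; simp) hb h
    · rw [h2]
      exact (Finset.card_image_le.trans (List.toFinset_card_le _)).trans alw26.1.le

theorem cap4_class (S : Finset (V 4)) (hS : IsCap S) (hcard : S.card = 20) : Eqv S S0 := by
  obtain ⟨ξ, hξ, hp⟩ : ∃ ξ : V 4, ξ ≠ 0 ∧ p3 S ξ + 72 < 3 * p2 S ξ + 2264 := by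
    by_contra hcon
    push Not at hcon
    have h1 := sum_bound (fun ξ => 3 * p2 S ξ + 2264) (fun ξ => p3 S ξ + 72) hcon
    simp only [Finset.sum_add_distrib, ← Finset.mul_sum] at h1
    rw [mom2 hK4, mom3 hK4 S hS, p2_zero, p3_zero, hcard, sum_const_V, sum_const_V] at h1
    norm_num at h1
  obtain ⟨T, hT, t0, t1⟩ := normal_dir S ξ hξ
    (fun a b c => a = 9 ∧ (b = 2 ∧ c = 9 ∨ b = 3 ∧ c = 8)) (by
    have h0 := hc_le cap3_le S hS ξ hξ 0
    have h1 := hc_le cap3_le S hS ξ hξ 1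
    have h2 := hc_le cap3_le S hS ξ hξ 2
    have h3 := hc_sum S ξ
    unfold p2 p3 at hp
    rintro a b c rfl rfl rfl
    generalize hc S ξ 0 = a at *
    generalize hc S ξ 1 = b at *
    generalize hc S ξ 2 = c at *
    rw [hcard] at h3
    obtain rfl : c = 20 - a - b := by omega
    clear hξ hS hcard
    interval_cases a <;> interval_cases b <;> omega)
  obtain ⟨f, hf, hf2⟩ := cap3_class _ (sl_cap (hT.cap hS) 0) t0
  obtain ⟨U, hU, hU2⟩ := exists_base T hf
  have u0 : sl U 0 = P3 := by rw [hU2, hf2]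
  have u1 : (sl U 1).card = 2 ∧ (sl U 2).card = 9 ∨ (sl U 1).card = 3 ∧ (sl U 2).card = 8 := by
    simpa [hU2] using t1
  obtain ⟨a, ha⟩ : (sl U 1).Nonempty := by
    rw [← Finset.card_pos]; omega
  obtain ⟨W, hW, hW2⟩ := exists_shear U (-a)
  have w0 : sl W 0 = P3 := by rw [hW2, map_addRight_zero _ _ (by simp), u0]
  have w1 : 0 ∈ sl W 1 := by
    rw [hW2, one_smul, Finset.mem_map_equiv]; simpa using ha
  have w2 : (sl W 1).card = 2 ∧ (sl W 2).card = 9 ∨ (sl W 1).card = 3 ∧ (sl W 2).card = 8 := by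
    simpa [hW2] using u1
  have hE := (hT.trans hU).trans hW
  have hWc := hE.cap hS
  have hsub : sl W 1 ⊆ {pt 0, pt 13, pt 26} := by
    intro x hx
    have := two_points (sl W 2) (sl_cap hWc 2) (by omega) x
      (fun p hp b hb => sl_cross hWc (by rw [w0]; exact hp) w1 hb)
      (fun p hp b hb => sl_cross hWc (by rw [w0]; exact hp) hx hb)
    simpa using this
  obtain ⟨c2, hA⟩ := slice1_form _ (Finset.mem_powerset.2 hsub) w1 (sl_cap hWc 1) (by omega)
  have c9 : (sl W 2).card = 9 := by omega
  rcases hA with hA | hA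
  · obtain ⟨X, hX, hX2⟩ := exists_shear W (pt 26)
    have : X = S0 := by
      apply S0_final _ (hX.cap hWc)
      · rw [hX2, map_addRight_zero _ _ (by simp), w0]
      · rw [hX2, one_smul, hA]; decide +kernel
      · rw [hX2]; simpa using c9
    rw [← this]; exact hE.trans hX
  · rw [← S0_final W hWc w0 hA c9]; exact hE

/-- Evaluates `m` before passing it on (only relevant for kernel reduction). -/
def force (m : ℕ) (f : ℕ → ℕ) : ℕ := Nat.rec (f 0) (fun k _ => f (k + 1)) m

theorem force_eq (m : ℕ) (f : ℕ → ℕ) : force m f = f m := by cases m <;> rfl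

def merge (n a b c : ℕ) : ℕ := a ||| b <<< n ||| c <<< (2 * n)

/-- Zero mask builder: processes the coefficient list, keeping masks of the values 0, 1, 2. -/
def go : List ℕ → ℕ → ℕ → ℕ → ℕ → ℕ
  | [], _, m0, _, _ => m0
  | 0 :: ks, n, m0, m1, m2 =>
      force (merge n m0 m0 m0) fun x => force (merge n m1 m1 m1) fun y =>
        force (merge n m2 m2 m2) fun z => go ks (3 * n) x y z
  | 1 :: ks, n, m0, m1, m2 =>
      force (merge n m0 m2 m1) fun x => force (merge n m1 m0 m2) fun y =>
        force (merge n m2 m1 m0) fun z => go ks (3 * n) x y z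
  | _ :: ks, n, m0, m1, m2 =>
      force (merge n m0 m1 m2) fun x => force (merge n m1 m2 m0) fun y =>
        force (merge n m2 m0 m1) fun z => go ks (3 * n) x y z

def mon (a b c d : ℕ) : List ℕ :=
  [a * a % 3, a * b % 3, a * c % 3, a * d % 3, b * b % 3, b * c % 3, b * d % 3, c * c % 3,
    c * d % 3, d * d % 3]

def Z (a b c d : ℕ) : ℕ := go (mon (a % 3) (b % 3) (c % 3) (d % 3)) 1 1 0 0

def pts : List (ℕ × ℕ × ℕ × ℕ) :=
  [0, 1, 2].flatMap fun a => [0, 1, 2].flatMap fun b => [0, 1, 2].flatMap fun c =>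
    [0, 1, 2].map fun d => (a, b, c, d)

/-- The cap, translated to have its anchor at the origin. -/
def D0 : List (ℕ × ℕ × ℕ × ℕ) := [(2, 2, 2, 2), (2, 2, 0, 2), (2, 2, 2, 0), (2, 2, 0, 0), (2, 0, 2, 2), (2, 1, 2, 0), (2, 1, 0, 2), (2, 1, 0, 1), (2, 1, 1, 0), (0, 2, 2, 2), (0, 1, 1, 1), (1, 2, 2, 0), (1, 2, 0, 2), (1, 2, 0, 1), (1, 2, 1, 0), (1, 0, 1, 1), (1, 1, 0, 0), (1, 1, 0, 1), (1, 1, 1, 0), (1, 1, 1, 1)]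

/-- representatives of two-dimensional subspaces -/
def planes : List ((ℕ × ℕ × ℕ × ℕ) × (ℕ × ℕ × ℕ × ℕ)) := [((0, 0, 0, 1), (0, 0, 1, 0)), ((0, 1, 0, 0), (1, 0, 1, 2)), ((0, 1, 0, 1), (1, 0, 0, 1)), ((0, 1, 0, 2), (1, 0, 2, 0)), ((0, 1, 2, 1), (1, 0, 0, 2)), ((0, 0, 0, 1), (0, 1, 1, 0)), ((0, 0, 0, 1), (0, 1, 2, 0)), ((0, 0, 1, 0), (1, 0, 0, 0)), ((0, 0, 1, 1), (0, 1, 0, 0)), ((0, 1, 0, 0), (1, 0, 2, 1)), ((0, 1, 1, 0), (1, 0, 0, 2)), ((0, 0, 1, 1), (0, 1, 0, 1)), ((0, 0, 1, 2), (1, 0, 0, 1)), ((0, 0, 0, 1), (1, 0, 1, 0)), ((0, 0, 1, 1), (1, 0, 0, 0)), ((0, 1, 0, 2), (1, 0, 2, 1)), ((0, 1, 1, 0), (1, 0, 2, 2)), ((0, 1, 1, 2), (1, 0, 1, 2)), ((0, 1, 2, 2), (1, 0, 0, 0)), ((0, 1, 0, 0), (1, 0, 0, 2)), ((0, 1, 0,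 1), (1, 0, 1, 0)), ((0, 1, 0, 2), (1, 0, 0, 0)), ((0, 1, 1, 2), (1, 0, 2, 1)), ((0, 0, 0, 1), (0, 1, 0, 0)), ((0, 0, 0, 1), (1, 0, 0, 0)), ((0, 0, 0, 1), (1, 0, 2, 0)), ((0, 0, 0, 1), (1, 1, 2, 0)), ((0, 0, 0, 1), (1, 2, 1, 0)), ((0, 0, 0, 1), (1, 2, 2, 0)), ((0, 0, 1, 0), (0, 1, 0, 0)), ((0, 0, 1, 0), (0, 1, 0, 1)), ((0, 0, 1, 0), (0, 1, 0, 2)), ((0, 0, 1, 0), (1, 0, 0, 1)), ((0, 0, 1, 0), (1, 0, 0, 2)), ((0, 0, 1, 0), (1, 1, 0, 2)), ((0, 0, 1, 0), (1, 2, 0, 1)), ((0, 0, 1, 0), (1, 2, 0, 2)), ((0, 0, 1, 1), (0, 1, 0, 2)), ((0, 0, 1, 1), (1, 0, 0, 1)), ((0, 0, 1, 1), (1, 0, 0, 2)), ((0, 0, 1, 1), (1, 1, 0, 1)), ((0, 0, 1, 1), (1, 1, 0, 2)), ((0, 0, 1, 1), (1, 2, 0, 0)), ((0, 0, 1, 2),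 (0, 1, 0, 0)), ((0, 0, 1, 2), (0, 1, 0, 1)), ((0, 0, 1, 2), (0, 1, 0, 2)), ((0, 0, 1, 2), (1, 0, 0, 0)), ((0, 0, 1, 2), (1, 0, 0, 2)), ((0, 0, 1, 2), (1, 1, 0, 0)), ((0, 0, 1, 2), (1, 1, 0, 2)), ((0, 0, 1, 2), (1, 2, 0, 0)), ((0, 1, 0, 0), (1, 0, 0, 0)), ((0, 1, 0, 0), (1, 0, 2, 0)), ((0, 1, 0, 0), (1, 0, 2, 2)), ((0, 1, 0, 1), (1, 0, 1, 2)), ((0, 1, 0, 1), (1, 0, 2, 0)), ((0, 1, 0, 1), (1, 0, 2, 1)), ((0, 1, 0, 1), (1, 0, 2, 2)), ((0, 1, 0, 2), (1, 0, 0, 2)), ((0, 1, 0, 2), (1, 0, 1, 0)), ((0, 1, 0, 2), (1, 0, 2, 2)), ((0, 1, 1, 0), (1, 0, 0, 1)), ((0, 1, 1, 0), (1, 0, 1, 0)), ((0, 1, 1, 0), (1, 0, 1, 2)), ((0, 1, 1, 0), (1, 0, 2, 1)), ((0, 1, 1, 2), (1, 0, 0, 0)), ((0, 1, 1, 2), (1,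 0, 0, 1)), ((0, 1, 1, 2), (1, 0, 1, 0)), ((0, 1, 1, 2), (1, 0, 2, 0)), ((0, 1, 2, 0), (1, 0, 0, 0)), ((0, 1, 2, 0), (1, 0, 0, 1)), ((0, 1, 2, 0), (1, 0, 0, 2)), ((0, 1, 2, 0), (1, 0, 1, 2)), ((0, 1, 2, 0), (1, 0, 2, 0)), ((0, 1, 2, 0), (1, 0, 2, 2)), ((0, 1, 2, 1), (1, 0, 0, 0)), ((0, 1, 2, 1), (1, 0, 0, 1)), ((0, 1, 2, 1), (1, 0, 1, 0)), ((0, 1, 2, 1), (1, 0, 1, 2)), ((0, 1, 2, 1), (1, 0, 2, 1)), ((0, 1, 2, 2), (1, 0, 0, 1)), ((0, 1, 2, 2), (1, 0, 0, 2)), ((0, 1, 2, 2), (1, 0, 1, 0)), ((0, 1, 2, 2), (1, 0, 2, 0)), ((0, 1, 2, 2), (1, 0, 2, 2))]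

def lorAll : List ℕ → ℕ
  | [] => 0
  | m :: ms => m ||| lorAll ms

def isoMask : ℕ := lorAll (planes.map fun p =>
  Z p.1.1 p.1.2.1 p.1.2.2.1 p.1.2.2.2 &&& Z p.2.1 p.2.2.1 p.2.2.2.1 p.2.2.2.2 &&&
   Z (2 * p.1.1 + 2 * p.2.1) (2 * p.1.2.1 + 2 * p.2.2.1) (2 * p.1.2.2.1 + 2 * p.2.2.2.1)
     (2 * p.1.2.2.2 + 2 * p.2.2.2.2))

def badMask (v : ℕ × ℕ × ℕ × ℕ) : ℕ := lorAll ((D0.filter (fun x => x != v)).map fun x =>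
  Z (x.1 + 2 * v.1) (x.2.1 + 2 * v.2.1) (x.2.2.1 + 2 * v.2.2.1) (x.2.2.2 + 2 * v.2.2.2))

def checkAll : Bool := pts.all fun v => v == (0, 0, 0, 0) ||
   Nat.beq (badMask v ||| isoMask) (2 ^ (3 ^ 10) - 1)

set_option exponentiation.threshold 100000 in
theorem checkAll_true : checkAll = true := by decide +kernel

theorem testBit_big {a n i : ℕ} (ha : a < 2 ^ n) (hi : n ≤ i) : a.testBit i = false :=
  Nat.testBit_lt_two_pow (lt_of_lt_of_le ha (Nat.pow_le_pow_right (by norm_num) hi))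

theorem merge_lt {n a b c : ℕ} (ha : a < 2 ^ n) (hb : b < 2 ^ n) (hc : c < 2 ^ n) :
    merge n a b c < 2 ^ (3 * n) := by
  apply Nat.lt_pow_two_of_testBit
  intro i hi
  simp only [merge, Nat.testBit_or, Nat.testBit_shiftLeft]
  rw [testBit_big ha (by omega), testBit_big hb (by omega), testBit_big hc (by omega)]
  simp

theorem merge_bit {n a b c i : ℕ} (ha : a < 2 ^ n) (hb : b < 2 ^ n) (hi : i < n) (d : ZMod 3) :
    (merge n a b c).testBit (i + d.val * n) =
      if d = 0 then a.testBit i else if d = 1 then b.testBit i else c.testBit i := by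
  have h3 : d = 0 ∨ d = 1 ∨ d = 2 := by revert d; decide
  rcases h3 with rfl | rfl | rfl
  · have : (0 : ZMod 3).val = 0 := rfl
    have h1 : ¬ n ≤ i := by omega
    have h2 : ¬ 2 * n ≤ i := by omega
    simp [merge, Nat.testBit_or, Nat.testBit_shiftLeft, h1, h2]
  · have : (1 : ZMod 3).val = 1 := rfl
    have h2 : ¬ 2 * n ≤ i + n := by omega
    simp [merge, Nat.testBit_or, Nat.testBit_shiftLeft, this, h2,
      testBit_big ha (show n ≤ i + n by omega)]
  · have : (2 : ZMod 3).val = 2 := rfl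
    have e : i + 2 * n - n = i + n := by omega
    have e2 : (2 : ZMod 3) ≠ 0 := by decide
    have e3 : (2 : ZMod 3) ≠ 1 := by decide
    simp [merge, Nat.testBit_or, Nat.testBit_shiftLeft, this, e, e2, e3,
      testBit_big ha (show n ≤ i + 2 * n by omega), testBit_big hb (show n ≤ i + n by omega)]

def idx : ℕ → ℕ → List (ZMod 3) → ℕ
  | _, i, [] => i
  | n, i, c :: cs => idx (3 * n) (i + c.val * n) cs

def dot : List ℕ → List (ZMod 3) → ZMod 3
  | k :: ks, c :: cs => (k : ZMod 3) * c + dot ks cs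
  | _, _ => 0

theorem idx_lt (cs : List (ZMod 3)) : ∀ n i, i < n → idx n i cs < 3 ^ cs.length * n := by
  induction cs with
  | nil => intro n i h; simpa [idx] using h
  | cons c cs ih =>
    intro n i h
    have hc : c.val < 3 := ZMod.val_lt c
    have := ih (3 * n) (i + c.val * n) (by nlinarith)
    simp only [idx, List.length_cons, pow_succ]
    linarith

theorem go_sound (ks : List ℕ) : ∀ (cs : List (ZMod 3)), ks.length = cs.length →
    (∀ k ∈ ks, k < 3) → ∀ (n m0 m1 m2 i : ℕ) (r : ZMod 3), i < n →
    m0 < 2 ^ n → m1 < 2 ^ n → m2 < 2 ^ n →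
    (m0.testBit i = true → r = 0) → (m1.testBit i = true → r = 1) →
    (m2.testBit i = true → r = 2) →
    (go ks n m0 m1 m2).testBit (idx n i cs) = true → r + dot ks cs = 0 := by
  induction ks with
  | nil =>
    intro cs hl _ n m0 m1 m2 i r _ _ _ _ h0 _ _ h
    cases cs with
    | nil => simpa [dot] using h0 h
    | cons _ _ => simp at hl
  | cons k ks ih =>
    intro cs hl hk n m0 m1 m2 i r hi b0 b1 b2 h0 h1 h2 h
    cases cs with
    | nil => simp at hl
    | cons c cs =>
      have hl' : ks.length = cs.length := by simpa using hl
      have hk' : ∀ k ∈ ks, k < 3 := fun k hk1 => hk k (by simp [hk1])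
      have hc : c.val < 3 := ZMod.val_lt c
      have hi' : i + c.val * n < 3 * n := by nlinarith
      have hk3 : k < 3 := hk k (by simp)
      have key : ∀ x y z : ℕ, x < 2 ^ (3 * n) → y < 2 ^ (3 * n) → z < 2 ^ (3 * n) →
          (x.testBit (i + c.val * n) = true → r + k * c = 0) →
          (y.testBit (i + c.val * n) = true → r + k * c = 1) →
          (z.testBit (i + c.val * n) = true → r + k * c = 2) →
          (go ks (3 * n) x y z).testBit (idx (3 * n) (i + c.val * n) cs) = true →
          r + dot (k :: ks) (c :: cs) = 0 := by
        intro x y z hx hy hz kx ky kz hh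
        have := ih cs hl' hk' (3 * n) x y z (i + c.val * n) (r + k * c) hi' hx hy hz kx ky kz hh
        simpa [dot, add_assoc] using this
      have hc3 : c = 0 ∨ c = 1 ∨ c = 2 :=
        (by decide : ∀ c : ZMod 3, c = 0 ∨ c = 1 ∨ c = 2) c
      have a1 : (2 : ZMod 3) ≠ 0 := by decide
      have a2 : (2 : ZMod 3) ≠ 1 := by decide
      interval_cases k <;> simp only [go, force_eq, idx] at h
      all_goals
        refine key _ _ _ (merge_lt ?_ ?_ ?_) (merge_lt ?_ ?_ ?_) (merge_lt ?_ ?_ ?_) ?_ ?_ ?_ h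
          <;> first
          | assumption
          | (rw [merge_bit (by assumption) (by assumption) hi]
             rcases hc3 with rfl | rfl | rfl <;> simp only [a1, a2, one_ne_zero, if_true, if_false]
             all_goals
               intro hb
               first
               | (rw [h0 hb]; decide)
               | (rw [h1 hb]; decide)
               | (rw [h2 hb]; decide))

/-- A quadratic form on `F_3^4` given by ten coefficients. -/
def qf (c : Fin 10 → ZMod 3) (y : Fin 4 → ZMod 3) : ZMod 3 :=
  c 0 * (y 0 * y 0) + c 1 * (y 0 * y 1) + c 2 * (y 0 * y 2) + c 3 * (y 0 * y 3) +
  c 4 * (y 1 * y 1) + c 5 * (y 1 * y 2) + c 6 * (y 1 * y 3) + c 7 * (y 2 * y 2) +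
  c 8 * (y 2 * y 3) + c 9 * (y 3 * y 3)

def cl (c : Fin 10 → ZMod 3) : List (ZMod 3) :=
  [c 0, c 1, c 2, c 3, c 4, c 5, c 6, c 7, c 8, c 9]

theorem cast_mod3 (a : ℕ) : ((a % 3 : ℕ) : ZMod 3) = a := by simp

theorem Z_sound (c : Fin 10 → ZMod 3) (a b d e : ℕ)
    (h : (Z a b d e).testBit (idx 1 0 (cl c)) = true) :
    qf c ![(a : ZMod 3), b, d, e] = 0 := by
  have := go_sound (mon (a % 3) (b % 3) (d % 3) (e % 3)) (cl c) rfl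
    (by simp only [mon]; intro k hk; simp only [List.mem_cons, List.not_mem_nil, or_false] at hk
        rcases hk with h | h | h | h | h | h | h | h | h | h <;> rw [h] <;>
          exact Nat.mod_lt _ (by norm_num))
    1 1 0 0 0 0 (by norm_num) (by norm_num) (by norm_num) (by norm_num)
    (by simp) (by simp) (by simp) h
  simp only [mon, cl, dot, cast_mod3, Nat.cast_mul] at this
  rw [← this]
  simp [qf]
  ring

def toV (p : ℕ × ℕ × ℕ × ℕ) : Fin 4 → ZMod 3 := ![(p.1 : ZMod 3), p.2.1, p.2.2.1, p.2.2.2]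

def ofV (v : Fin 4 → ZMod 3) : ℕ × ℕ × ℕ × ℕ := ((v 0).val, (v 1).val, (v 2).val, (v 3).val)

theorem toV_ofV (v : Fin 4 → ZMod 3) : toV (ofV v) = v := by
  funext i; fin_cases i <;> simp [toV, ofV]

theorem ofV_mem (v : Fin 4 → ZMod 3) : ofV v ∈ pts := by
  have h : ∀ a : ZMod 3, a.val = 0 ∨ a.val = 1 ∨ a.val = 2 := by decide
  simp only [ofV, pts, List.mem_flatMap, List.mem_map, List.mem_cons, List.not_mem_nil, or_false]
  exact ⟨_, h (v 0), _, h (v 1), _, h (v 2), _, h (v 3), rfl⟩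

theorem lorAll_bit {l : List ℕ} {i : ℕ} (h : (lorAll l).testBit i = true) :
    ∃ m ∈ l, m.testBit i = true := by
  induction l with
  | nil => simp [lorAll] at h
  | cons m l ih =>
    simp only [lorAll, Nat.testBit_or, Bool.or_eq_true] at h
    rcases h with h | h
    · exact ⟨m, by simp, h⟩
    · obtain ⟨m', h1, h2⟩ := ih h
      exact ⟨m', by simp [h1], h2⟩

theorem planes_ok : ∀ p ∈ planes, toV p.1 ≠ 0 ∧ toV p.2 ≠ 0 ∧ toV p.1 ≠ toV p.2 ∧
    toV p.1 + toV p.2 ≠ 0 := by decide +kernel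

set_option exponentiation.threshold 100000 in
theorem final_check (c : Fin 10 → ZMod 3) (v : Fin 4 → ZMod 3) (hv : v ≠ 0) :
    (∃ x ∈ D0, toV x ≠ v ∧ qf c (toV x - v) = 0) ∨
    (∃ x y : Fin 4 → ZMod 3, x ≠ 0 ∧ y ≠ 0 ∧ x ≠ y ∧ x + y ≠ 0 ∧ qf c x = 0 ∧ qf c y = 0 ∧
      qf c (-(x + y)) = 0) := by
  have h := checkAll_true
  unfold checkAll at h
  rw [List.all_eq_true] at h
  have h := h _ (ofV_mem v)
  simp only [Bool.or_eq_true, beq_iff_eq, Nat.beq_eq] at h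
  rcases h with h | h
  · exact absurd (by rw [← toV_ofV v, h]; funext i; fin_cases i <;> rfl) hv
  have hi : idx 1 0 (cl c) < 3 ^ 10 := by simpa [cl] using idx_lt (cl c) 1 0 (by norm_num)
  have hb : (badMask (ofV v) ||| isoMask).testBit (idx 1 0 (cl c)) = true := by
    rw [h, Nat.testBit_two_pow_sub_one]; simpa using hi
  clear h
  have two : (2 : ZMod 3) = -1 := by decide
  rw [Nat.testBit_or, Bool.or_eq_true] at hb
  rcases hb with hb | hb
  · left
    obtain ⟨m, hm, hm2⟩ := lorAll_bit hb
    simp only [List.mem_map, List.mem_filter, bne_iff_ne] at hm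
    obtain ⟨x, ⟨hx, hxv⟩, rfl⟩ := hm
    have D0small : ∀ x ∈ D0, ofV (toV x) = x := by decide +kernel
    refine ⟨x, hx, ?_, ?_⟩
    · intro e; exact hxv (by rw [← e, D0small x hx])
    · have := Z_sound c _ _ _ _ hm2
      rw [← this]; congr 1
      funext i; fin_cases i <;> simp [toV, ofV, two, sub_eq_add_neg]
  · right
    obtain ⟨m, hm, hm2⟩ := lorAll_bit hb
    simp only [List.mem_map] at hm
    obtain ⟨p, hp, rfl⟩ := hm
    simp only [Nat.testBit_and, Bool.and_eq_true] at hm2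
    obtain ⟨⟨h1, h2⟩, h3⟩ := hm2
    obtain ⟨k1, k2, k3, k4⟩ := planes_ok p hp
    refine ⟨toV p.1, toV p.2, k1, k2, k3, k4, Z_sound c _ _ _ _ h1, Z_sound c _ _ _ _ h2, ?_⟩
    have := Z_sound c _ _ _ _ h3
    rw [← this]; congr 1
    funext i; fin_cases i <;> simp [toV, two, add_comm]

/-! ### Assembly -/

def a0 : V 4 := ![1, 1, 1, 1]

def c0 : Fin 10 → ZMod 3 := ![1, 1, 2, 2, 1, 2, 2, 2, 0, 2]

theorem S0_card : S0.card = 20 := by decide +kernel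

theorem S0_cap : IsCap S0 := by decide +kernel

theorem S0_complete : ∀ x : V 4, x ∉ S0 → ∃ y ∈ S0, -(x + y) ∈ S0 ∧ y ≠ -(x + y) := by
  decide +kernel

theorem S0_anchor : -∑ x ∈ S0, x = a0 := by decide +kernel

theorem S0_quad : ∀ x : V 4, x ∈ S0 ↔ x ≠ a0 ∧ qf c0 (x - a0) = 0 := by decide +kernel

theorem D0_S0 : ∀ x ∈ D0, toV x + a0 ∈ S0 := by decide +kernel

theorem max_class (S : Finset (V 4)) (hS : MaximalCap S) : Eqv S S0 := by
  have h20 : 20 ≤ S.card := by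
    have := hS.2 S0 S0_cap
    rwa [S0_card] at this
  obtain ⟨U, hU, hUc⟩ := Finset.exists_subset_card_eq h20
  obtain ⟨f, hf, hfU⟩ := cap4_class U (IsCap_subset hU hS.1) hUc
  refine ⟨f, hf, ?_⟩
  have hsub : S0 ⊆ S.map f.toEmbedding := by
    rw [← hfU]; exact Finset.map_subset_map.2 hU
  have hcap := cap_map hf hS.1
  refine Finset.Subset.antisymm (fun x hx => ?_) hsub
  by_contra hn
  obtain ⟨y, hy, hz, hyz⟩ := S0_complete x hn
  refine hcap x hx y (hsub hy) _ (hsub hz) ?_ ?_ hyz (by abel)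
  · rintro rfl; exact hn hy
  · intro h; rw [← h] at hz; exact hn hz

/-- The linear part of a collineation. -/
theorem aff_lin {n : ℕ} {f : V n ≃ V n} (hf : Aff f) :
    ∃ g : V n →+ V n, ∀ x y, f x - f y = g (x - y) := by
  have hneg : ∀ x, f (-x) = -(f x + f 0) := fun x => by
    have := hf x 0 (-x) (by abel)
    exact eq_neg_add this
  have h1 : ∀ x y, f (x + y) = f x + f y - f 0 := fun x y => by
    have := hf (-x) (-y) (x + y) (by abel)
    rw [eq_neg_add this, hneg, hneg]
    have h3 := three_self (f 0)
    have h4 : f 0 + f 0 = - f 0 := eq_neg_of_add_eq_zero_left h3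
    calc -(-(f x + f 0) + -(f y + f 0)) = f x + f y + (f 0 + f 0) := by abel
      _ = _ := by rw [h4]; abel
  refine ⟨AddMonoidHom.mk' (fun x => f x - f 0) (fun x y => by
    simp only [h1]; abel), fun x y => ?_⟩
  simp only [AddMonoidHom.mk'_apply]
  have := h1 (x - y) y
  rw [sub_add_cancel] at this
  rw [this]; abel

theorem aff_anchor {f : V 4 ≃ V 4} (hf : Aff f) (T : Finset (V 4)) (hT : T.card = 20) :
    -∑ x ∈ T.map f.toEmbedding, x = f (-∑ x ∈ T, x) := by
  obtain ⟨g, hg⟩ := aff_lin hf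
  have h : ∀ x, f x = g x + f 0 := fun x => by
    have := hg x 0
    rw [sub_zero] at this
    rw [← this]; abel
  rw [Finset.sum_map]
  simp only [Equiv.coe_toEmbedding]
  rw [h (-∑ x ∈ T, x), map_neg, map_sum, Finset.sum_congr rfl (fun x _ => h x),
    Finset.sum_add_distrib, Finset.sum_const, hT]
  have h3 := three_self (f 0)
  have : (20 : ℕ) • f 0 = (7 : ℕ) • (f 0 + f 0 + f 0) - f 0 := by abel
  rw [this, h3]; simp only [smul_zero]; abel

theorem qf_comp (c : Fin 10 → ZMod 3) (g : V 4 →+ V 4) :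
    ∃ c' : Fin 10 → ZMod 3, ∀ y, qf c (g y) = qf c' y := by
  let L := g.toZModLinearMap 3
  have hL : ∀ y i, g y i = y 0 * L (Pi.single 0 1) i + y 1 * L (Pi.single 1 1) i +
      y 2 * L (Pi.single 2 1) i + y 3 * L (Pi.single 3 1) i := by
    intro y i
    have h : L y = ∑ j, y j • L (Pi.single j 1) := by
      conv_lhs => rw [pi_eq_sum_univ' y]
      rw [map_sum]
      simp only [map_smul]
    have h2 : g y = L y := rfl
    rw [h2, h]
    simp [Fin.sum_univ_four]
  generalize L (Pi.single 0 1) = p at hL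
  generalize L (Pi.single 1 1) = q at hL
  generalize L (Pi.single 2 1) = r at hL
  generalize L (Pi.single 3 1) = s at hL
  let B : V 4 → V 4 → ZMod 3 := fun u v => qf c (u + v) - qf c u - qf c v
  refine ⟨![qf c p, B p q, B p r, B p s, qf c q, B q r, B q s, qf c r, B r s, qf c s],
    fun y => ?_⟩
  simp only [qf, hL, B, Pi.add_apply, Matrix.cons_val]
  ring

theorem main (S T : Finset (V 4)) (hS : MaximalCap S) (hT : MaximalCap T)
    (hanchor : (-∑ x ∈ S, x) ≠ (-∑ x ∈ T, x)) : (S ∩ T).Nonempty := by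
  obtain ⟨f, hf, hfS⟩ := max_class S hS
  obtain ⟨k, hk, hkT⟩ := max_class T hT
  have cS : S.card = 20 := by rw [← S0_card, ← hfS, Finset.card_map]
  have cT : T.card = 20 := by rw [← S0_card, ← hkT, Finset.card_map]
  have aS := aff_anchor hf S cS
  have aT := aff_anchor hk T cT
  rw [hfS, S0_anchor] at aS
  rw [hkT, S0_anchor] at aT
  obtain ⟨g, hg⟩ := aff_lin (hf.symm.trans hk)
  obtain ⟨c, hc⟩ := qf_comp c0 g
  set b := f (-∑ x ∈ T, x) with hb
  have hne : b - a0 ≠ 0 := by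
    rw [aS, sub_ne_zero]
    exact fun h => hanchor (f.injective h).symm
  have hbk : (f.symm.trans k) b = a0 := by rw [aT, hb]; simp
  have mem : ∀ x, x ≠ 0 → qf c x = 0 → f.symm (x + b) ∈ T := by
    intro x hx hq
    have h1 : k (f.symm (x + b)) ∈ S0 := by
      rw [S0_quad]
      constructor
      · intro h
        apply hx
        have : (f.symm.trans k) (x + b) = (f.symm.trans k) b := by rw [hbk]; exact h
        simpa using (f.symm.trans k).injective this
      · have h2 := hg (x + b) b
        rw [hbk, add_sub_cancel_right] at h2
        have h3 : k (f.symm (x + b)) - a0 = g x := h2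
        rw [h3, hc, hq]
    rw [← hkT, Finset.mem_map_equiv] at h1
    simpa using h1
  rcases final_check c (b - a0) hne with ⟨x, hx, hxv, hq⟩ | ⟨x, y, hx, hy, hxy, hs, qx, qy, qz⟩
  · have h1 := mem _ (sub_ne_zero.2 hxv) hq
    have e : toV x - (b - a0) + b = toV x + a0 := by abel
    rw [e] at h1
    have h2 := D0_S0 x hx
    rw [← hfS, Finset.mem_map_equiv] at h2
    exact ⟨_, Finset.mem_inter.2 ⟨h2, h1⟩⟩
  · exfalso
    have h1 := mem _ hx qx
    have h2 := mem _ hy qy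
    have h3 := mem _ (neg_ne_zero.2 hs) qz
    have t3 : ∀ u v : V 4, -(u + v) = u → v = u := by
      intro u v h
      have h5 := eq_neg_add (three_self u)
      have h6 : u + v = -u := by rw [← h, neg_neg]; rw [h]
      have : v = -u - u := by rw [← h6]; abel
      calc v = -(u + u) := by rw [this]; abel
        _ = u := h5.symm
    refine hT.1 _ h1 _ h2 _ h3 ?_ ?_ ?_ ?_
    · simpa using hxy
    · intro h
      have : x = -(x + y) := by simpa using h
      exact hxy (t3 x y this.symm).symm
    · intro h
      have : y = -(x + y) := by simpa using h
      rw [add_comm] at this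
      exact hxy (t3 y x this.symm)
    · apply hf.symm
      have := three_self b
      calc x + b + (y + b) + (-(x + y) + b) = b + b + b := by abel
        _ = 0 := this

end CapAux
/-- Any two maximal caps in `AG(4,3)` with different anchor points intersect. -/
theorem maximal_caps_AG43_different_anchors_intersect
    (S T : Finset (Fin 4 → ZMod 3)) (hS : MaximalCap S) (hT : MaximalCap T)
    (hanchor : (-∑ x ∈ S, x) ≠ (-∑ x ∈ T, x)) :
    (S ∩ T).Nonempty := by
  exact CapAux.main S T hS hT hanchor
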